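/- Linear convolution estimate. For each α ∈ (1,2) there exists a constant c(α) such that for every K ≥ 0, every measurable vector field U : ℝ³ → ℝ³ with |U(x)| ≤ K/(1+|x|) for all x, and every continuous vector field v : ℝ³ → ℝ³ with ‖v‖_α < ∞, the function u : ℝ³ → ℝ³ defined componentwise by u_i(x) = ∫_{ℝ³} ∂_k G_ij(x−y) ( U_j(y) v_k(y) + v_j(y) U_k(y) ) dy (summation over j,k = 1,2,3) is well defined (the integral converges absolutely for every x) and satisfies ‖u‖_α ≤ c(α) K ‖v‖_α. -/

import Mathlib

open MeasureTheory Real Metric Filter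

noncomputable section

abbrev E3 : Type := EuclideanSpace ℝ (Fin 3)

def ee (j : Fin 3) : E3 := EuclideanSpace.single j 1

/-- the Green (Oseen) tensor of the Stokes operator -/
def G (i j : Fin 3) (x : E3) : ℝ :=
  (1 / (8 * π)) * ((if i = j then 1 else 0) / ‖x‖ + x i * x j / ‖x‖ ^ 3)

/-- `∂ₖ G_{ij}` -/
def dG (i j k : Fin 3) (x : E3) : ℝ := fderiv ℝ (G i j) x (ee k)

/-- the norm of the space `X_α` -/
def Xnorm (α : ℝ) (v : E3 → E3) : ℝ := ⨆ x : E3, (1 + ‖x‖) ^ α * ‖v x‖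

lemma hasDerivAt_coord_line (x w : E3) (i : Fin 3) :
    HasDerivAt (fun t : ℝ => (x + t • w) i) (w i) 0 := by
  have h := ((hasDerivAt_id (0 : ℝ)).mul_const (w i)).const_add (x i)
  simpa using h

/-- The first derivatives of the Oseen tensor decay quadratically. -/
lemma abs_dG_le (i j k : Fin 3) {x : E3} (hx : x ≠ 0) :
    |dG i j k x| ≤ 6 * ‖x‖ ^ (-2 : ℝ) := by
  have hr : 0 < ‖x‖ := norm_pos_iff.mpr hx
  have hnorm : DifferentiableAt ℝ (fun y : E3 => ‖y‖) x := differentiableAt_id.norm ℝ hx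
  have hcoord (l : Fin 3) : DifferentiableAt ℝ (fun y : E3 => y l) x := by fun_prop
  have hG : DifferentiableAt ℝ (G i j) x := by
    unfold G
    simp only [div_eq_mul_inv]
    exact (((differentiableAt_const _).mul (hnorm.inv hr.ne')).add
      (((hcoord i).mul (hcoord j)).mul ((hnorm.pow 3).inv (pow_ne_zero 3 hr.ne')))).const_mul _
  set w : E3 := ee k with hw
  have hwn : ‖w‖ = 1 := by simp [hw, ee]
  have hline : HasDerivAt (fun t : ℝ => x + t • w) w 0 := by
    simpa using ((hasDerivAt_id (0 : ℝ)).smul_const w).const_add x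
  have hx0 : x = x + (0 : ℝ) • w := by simp
  set n : ℝ := fderiv ℝ (fun y : E3 => ‖y‖) x w with hn
  have hn1 : |n| ≤ 1 := by
    have h1 : ‖fderiv ℝ (fun y : E3 => ‖y‖) x‖ ≤ ((1 : NNReal) : ℝ) :=
      norm_fderiv_le_of_lipschitz ℝ lipschitzWith_one_norm
    calc |n| ≤ ‖fderiv ℝ (fun y : E3 => ‖y‖) x‖ * ‖w‖ :=
          (fderiv ℝ (fun y : E3 => ‖y‖) x).le_opNorm w
      _ ≤ 1 := by rw [hwn, mul_one]; simpa using h1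
  have hnl : HasDerivAt (fun t : ℝ => ‖x + t • w‖) n 0 :=
    HasFDerivAt.comp_hasDerivAt_of_eq (0 : ℝ) hnorm.hasFDerivAt hline hx0
  have hGl : HasDerivAt (fun t : ℝ => G i j (x + t • w)) (dG i j k x) 0 :=
    HasFDerivAt.comp_hasDerivAt_of_eq (0 : ℝ) hG.hasFDerivAt hline hx0
  have hr0 : ‖x + (0 : ℝ) • w‖ ≠ 0 := by simpa using hr.ne'
  have hcalc := (((hasDerivAt_const (0 : ℝ) (if i = j then (1 : ℝ) else 0)).div hnl hr0).add
    (((hasDerivAt_coord_line x w i).mul (hasDerivAt_coord_line x w j)).div (hnl.pow 3)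
      (pow_ne_zero 3 hr0))).const_mul (1 / (8 * π))
  have heq := hGl.unique hcalc
  simp only [zero_smul, add_zero, zero_mul, zero_sub, Pi.mul_apply, Pi.pow_apply] at heq
  rw [heq, Real.rpow_neg hr.le, Real.rpow_two]
  have hxi : |x i| ≤ ‖x‖ := PiLp.norm_apply_le x i
  have hxj : |x j| ≤ ‖x‖ := PiLp.norm_apply_le x j
  have hwi : |w i| ≤ 1 := hwn ▸ PiLp.norm_apply_le w i
  have hwj : |w j| ≤ 1 := hwn ▸ PiLp.norm_apply_le w j
  have hδ : |if i = j then (1 : ℝ) else 0| ≤ 1 := by split_ifs <;> simp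
  have hc : |1 / (8 * π)| ≤ 1 := by
    rw [abs_of_pos (by positivity), div_le_one (by positivity)]
    linarith [Real.pi_gt_three]
  generalize (if i = j then (1 : ℝ) else 0) = δ at *
  generalize ‖x‖ = r at *
  generalize 1 / (8 * π) = c at *
  generalize x i = a at *
  generalize x j = b at *
  generalize w i = p at *
  generalize w j = q at *
  have e : c * (-(δ * n) / r ^ 2 +
      ((p * b + a * q) * r ^ 3 - a * b * (((3 : ℕ) : ℝ) * r ^ (3 - 1) * n)) / (r ^ 3) ^ 2) =
      c * (-(δ * n) + p * (b / r) + (a / r) * q - 3 * ((a / r) * (b / r) * n)) * (r ^ 2)⁻¹ := by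
    field_simp
    push_cast
    ring
  have har : |a / r| ≤ 1 := by rw [abs_div, abs_of_pos hr]; exact (div_le_one hr).mpr hxi
  have hbr : |b / r| ≤ 1 := by rw [abs_div, abs_of_pos hr]; exact (div_le_one hr).mpr hxj
  have hmul {s t : ℝ} (hs : |s| ≤ 1) (ht : |t| ≤ 1) : |s * t| ≤ 1 := by
    rw [abs_mul]; exact mul_le_one₀ hs (abs_nonneg _) ht
  have h1 := abs_le.mp (hmul hδ hn1)
  have h2 := abs_le.mp (hmul hwi hbr)
  have h3 := abs_le.mp (hmul har hwj)
  have h4 := abs_le.mp (hmul (hmul har hbr) hn1)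
  have hsum : |-(δ * n) + p * (b / r) + (a / r) * q - 3 * ((a / r) * (b / r) * n)| ≤ 6 := by
    rw [abs_le]; constructor <;> linarith [h1.1, h1.2, h2.1, h2.2, h3.1, h3.2, h4.1, h4.2]
  refine (congrArg abs e).trans_le ?_
  rw [abs_mul, abs_mul, abs_of_pos (by positivity : 0 < (r ^ 2)⁻¹)]
  gcongr
  calc |c| * _ ≤ 1 * 6 := mul_le_mul hc hsum (abs_nonneg _) zero_le_one
    _ = 6 := one_mul 6

/-- A radial kernel with singularity `‖z‖ ^ (-a)` at the origin and decay `‖z‖ ^ (-a - b)` at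
infinity, changing regime at scale `ρ`. -/
def radialKernel (a b ρ : ℝ) (z : E3) : ℝ := ‖z‖ ^ (-a) * max ρ ‖z‖ ^ (-b)

lemma integrable_radialKernel_one {a b : ℝ} (ha : a < 3) (hab : 3 < a + b) :
    Integrable (radialKernel a b 1) := by
  unfold radialKernel
  rw [integrable_fun_norm_addHaar volume (f := fun t : ℝ => t ^ (-a) * max 1 t ^ (-b))]
  simp only [finrank_euclideanSpace, Fintype.card_fin, smul_eq_mul]
  rw [← Set.Ioc_union_Ioi_eq_Ioi zero_le_one]
  refine IntegrableOn.union ?_ ?_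
  · have h : IntegrableOn (fun t : ℝ => t ^ (2 - a)) (Set.Ioc 0 1) := by
      rw [← intervalIntegrable_iff_integrableOn_Ioc_of_le zero_le_one]
      exact intervalIntegral.intervalIntegrable_rpow' (by linarith)
    refine h.congr_fun (fun t ht => ?_) measurableSet_Ioc
    have ht0 : 0 < t := ht.1
    simp only [max_eq_left ht.2, Real.one_rpow, mul_one]
    rw [← Real.rpow_natCast, ← Real.rpow_add ht0]
    norm_num [sub_eq_add_neg]
  · have h : IntegrableOn (fun t : ℝ => t ^ (2 - a - b)) (Set.Ioi 1) :=
      integrableOn_Ioi_rpow_of_lt (by linarith) zero_lt_one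
    refine h.congr_fun (fun t ht => ?_) measurableSet_Ioi
    have ht1 : 1 < t := ht
    have ht0 : 0 < t := zero_lt_one.trans ht1
    simp only [max_eq_right ht1.le]
    rw [← Real.rpow_natCast, ← Real.rpow_add ht0, ← Real.rpow_add ht0]
    norm_num [sub_eq_add_neg, add_assoc]

lemma radialKernel_eq_smul (a b : ℝ) {ρ : ℝ} (hρ : 0 < ρ) :
    radialKernel a b ρ = fun z => ρ ^ (-a - b) * radialKernel a b 1 (ρ⁻¹ • z) := by
  funext z
  have h1 : ‖z‖ = ρ * ‖ρ⁻¹ • z‖ := by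
    rw [norm_smul, norm_inv, Real.norm_of_nonneg hρ.le, mul_inv_cancel_left₀ hρ.ne']
  have h2 : max ρ ‖z‖ = ρ * max 1 ‖ρ⁻¹ • z‖ := by
    rw [mul_max_of_nonneg _ _ hρ.le, ← h1, mul_one]
  unfold radialKernel
  rw [h2, h1, Real.mul_rpow hρ.le (norm_nonneg _),
    Real.mul_rpow hρ.le (zero_le_one.trans (le_max_left _ _)), sub_eq_add_neg, Real.rpow_add hρ]
  ring

lemma integrable_radialKernel {a b ρ : ℝ} (ha : a < 3) (hab : 3 < a + b) (hρ : 0 < ρ) :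
    Integrable (radialKernel a b ρ) := by
  rw [radialKernel_eq_smul a b hρ]
  exact ((integrable_radialKernel_one ha hab).comp_smul (inv_ne_zero hρ.ne')).const_mul _

lemma integral_radialKernel (a b : ℝ) {ρ : ℝ} (hρ : 0 < ρ) :
    ∫ z, radialKernel a b ρ z = ρ ^ (3 - a - b) * ∫ z, radialKernel a b 1 z := by
  rw [radialKernel_eq_smul a b hρ, integral_const_mul,
    Measure.integral_comp_inv_smul volume (radialKernel a b 1) ρ]
  simp only [finrank_euclideanSpace, Fintype.card_fin, smul_eq_mul]
  rw [abs_of_pos (by positivity), ← mul_assoc, ← Real.rpow_natCast, ← Real.rpow_add hρ]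
  congr 2
  push_cast
  ring

lemma radialKernel_nonneg (a b ρ : ℝ) (z : E3) : 0 ≤ radialKernel a b ρ z :=
  mul_nonneg (Real.rpow_nonneg (norm_nonneg _) _)
    (Real.rpow_nonneg ((norm_nonneg z).trans (le_max_right _ _)) _)

/-- The convolution integrand is dominated by two radial kernels, one centred at the origin and
one centred at `x`. -/
lemma rpow_mul_rpow_le_radialKernel {β : ℝ} (hβ : 0 ≤ β) {x y : E3} (hy : y ≠ 0) :
    ‖x - y‖ ^ (-2 : ℝ) * (1 + ‖y‖) ^ (-β) ≤
      radialKernel β 2 ((1 + ‖x‖) / 2) y + radialKernel 2 β ((1 + ‖x‖) / 2) (x - y) := by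
  have hy0 : 0 < ‖y‖ := norm_pos_iff.mpr hy
  have hρ : 0 < (1 + ‖x‖) / 2 := by positivity
  have htri : ‖x‖ ≤ ‖x - y‖ + ‖y‖ := by simpa using norm_add_le (x - y) y
  rcases le_total (1 + ‖y‖) ‖x - y‖ with h | h
  · refine le_add_of_le_of_nonneg ?_ (radialKernel_nonneg _ _ _ _)
    rw [mul_comm, radialKernel]
    refine mul_le_mul ?_ ?_ (Real.rpow_nonneg (norm_nonneg _) _) (Real.rpow_nonneg hy0.le _)
    · exact Real.rpow_le_rpow_of_nonpos hy0 (by linarith) (by linarith)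
    · exact Real.rpow_le_rpow_of_nonpos (lt_max_of_lt_left hρ)
        (max_le (by linarith) (by linarith)) (by norm_num)
  · refine le_add_of_nonneg_of_le (radialKernel_nonneg _ _ _ _) ?_
    rw [radialKernel]
    refine mul_le_mul_of_nonneg_left ?_ (Real.rpow_nonneg (norm_nonneg _) _)
    exact Real.rpow_le_rpow_of_nonpos (lt_max_of_lt_left hρ)
      (max_le (by linarith) h) (by linarith)

lemma norm_le_Xnorm {α : ℝ} {v : E3 → E3}
    (hv : BddAbove (Set.range fun x : E3 => (1 + ‖x‖) ^ α * ‖v x‖)) (x : E3) :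
    ‖v x‖ ≤ Xnorm α v * (1 + ‖x‖) ^ (-α) := by
  have h : (1 + ‖x‖) ^ α * ‖v x‖ ≤ Xnorm α v := le_ciSup hv x
  have hp : 0 < (1 + ‖x‖) ^ α := by positivity
  rw [Real.rpow_neg (by positivity), ← div_eq_mul_inv, le_div_iff₀ hp, mul_comm]
  exact h

lemma Xnorm_nonneg (α : ℝ) (v : E3 → E3) : 0 ≤ Xnorm α v :=
  Real.iSup_nonneg fun x => by positivity

/-- The sum of the two dominating radial kernels. -/
def dominatingKernel (α : ℝ) (x y : E3) : ℝ :=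
  radialKernel (1 + α) 2 ((1 + ‖x‖) / 2) y + radialKernel 2 (1 + α) ((1 + ‖x‖) / 2) (x - y)

lemma integrable_dominatingKernel {α : ℝ} (hα1 : 1 < α) (hα2 : α < 2) (x : E3) :
    Integrable (dominatingKernel α x) :=
  (integrable_radialKernel (by linarith) (by linarith) (by positivity)).add
    ((integrable_radialKernel (by norm_num) (by linarith) (by positivity)).comp_sub_left x)

lemma integral_dominatingKernel {α : ℝ} (hα1 : 1 < α) (hα2 : α < 2) (x : E3) :
    ∫ y, dominatingKernel α x y = ((1 + ‖x‖) / 2) ^ (-α) *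
      ((∫ z, radialKernel (1 + α) 2 1 z) + ∫ z, radialKernel 2 (1 + α) 1 z) := by
  have hρ : 0 < (1 + ‖x‖) / 2 := by positivity
  unfold dominatingKernel
  rw [integral_add (integrable_radialKernel (by linarith) (by linarith) hρ)
      ((integrable_radialKernel (by norm_num) (by linarith) hρ).comp_sub_left x),
    integral_sub_left_eq_self (radialKernel 2 (1 + α) ((1 + ‖x‖) / 2)),
    integral_radialKernel _ _ hρ, integral_radialKernel _ _ hρ, mul_add]
  congr 3 <;> ring

lemma norm_convolution_integrand_le {α K : ℝ} (hα : 0 ≤ α) {U v : E3 → E3}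
    (hU : ∀ x : E3, ‖U x‖ ≤ K / (1 + ‖x‖))
    (hv : BddAbove (Set.range fun x : E3 => (1 + ‖x‖) ^ α * ‖v x‖))
    (hK : 0 ≤ K) (i : Fin 3) {x y : E3} (hy : y ≠ 0) (hxy : x - y ≠ 0) :
    ‖∑ j, ∑ k, dG i j k (x - y) * (U y j * v y k + v y j * U y k)‖ ≤
      108 * K * Xnorm α v * dominatingKernel α x y := by
  have hprod : ‖U y‖ * ‖v y‖ ≤ K * Xnorm α v * (1 + ‖y‖) ^ (-(1 + α)) := by
    refine (mul_le_mul (hU y) (norm_le_Xnorm hv y) (norm_nonneg _) (by positivity)).trans_eq ?_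
    rw [neg_add, Real.rpow_add (by positivity), Real.rpow_neg_one]
    ring
  have hterm (j k : Fin 3) : ‖dG i j k (x - y) * (U y j * v y k + v y j * U y k)‖ ≤
      6 * ‖x - y‖ ^ (-2 : ℝ) * (2 * (‖U y‖ * ‖v y‖)) := by
    rw [norm_mul]
    refine mul_le_mul (abs_dG_le i j k hxy) ?_ (norm_nonneg _) (by positivity)
    have h (p q : Fin 3) : ‖U y p * v y q‖ ≤ ‖U y‖ * ‖v y‖ := by
      rw [norm_mul]
      exact mul_le_mul (PiLp.norm_apply_le _ _) (PiLp.norm_apply_le _ _) (norm_nonneg _)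
        (norm_nonneg _)
    calc _ ≤ ‖U y j * v y k‖ + ‖v y j * U y k‖ := norm_add_le _ _
      _ ≤ 2 * (‖U y‖ * ‖v y‖) := by rw [mul_comm (v y j)]; linarith [h j k, h k j]
  have hM := Xnorm_nonneg α v
  calc _ ≤ ∑ _j : Fin 3, ∑ _k : Fin 3, 6 * ‖x - y‖ ^ (-2 : ℝ) * (2 * (‖U y‖ * ‖v y‖)) :=
        norm_sum_le_of_le _ fun j _ => norm_sum_le_of_le _ fun k _ => hterm j k
    _ = 108 * ‖x - y‖ ^ (-2 : ℝ) * (‖U y‖ * ‖v y‖) := by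
        simp only [Finset.sum_const, Finset.card_univ, Fintype.card_fin, nsmul_eq_mul]
        push_cast
        ring
    _ ≤ 108 * ‖x - y‖ ^ (-2 : ℝ) * (K * Xnorm α v * (1 + ‖y‖) ^ (-(1 + α))) := by gcongr
    _ = 108 * K * Xnorm α v * (‖x - y‖ ^ (-2 : ℝ) * (1 + ‖y‖) ^ (-(1 + α))) := by ring
    _ ≤ _ := by
        gcongr
        exact rpow_mul_rpow_le_radialKernel (by linarith) hy

lemma norm_le_sum_norm_apply (w : E3) : ‖w‖ ≤ ∑ i, ‖w i‖ := by
  rw [EuclideanSpace.norm_eq]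
  exact Real.sqrt_le_iff.mpr ⟨by positivity,
    Finset.sum_sq_le_sq_sum_of_nonneg fun i _ => norm_nonneg _⟩

theorem linear_convolution_estimate (α : ℝ) (hα1 : 1 < α) (hα2 : α < 2) :
    ∃ c : ℝ, ∀ K : ℝ, 0 ≤ K → ∀ U : E3 → E3, Measurable U →
      (∀ x : E3, ‖U x‖ ≤ K / (1 + ‖x‖)) →
      ∀ v : E3 → E3, Continuous v →
      BddAbove (Set.range fun x : E3 => (1 + ‖x‖) ^ α * ‖v x‖) →
      (∀ (x : E3) (i : Fin 3),
        Integrable (fun y : E3 =>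
          ∑ j, ∑ k, dG i j k (x - y) * (U y j * v y k + v y j * U y k))) ∧
      (∀ u : E3 → E3,
        (∀ (x : E3) (i : Fin 3),
          u x i = ∫ y : E3,
            ∑ j, ∑ k, dG i j k (x - y) * (U y j * v y k + v y j * U y k)) →
        Xnorm α u ≤ c * K * Xnorm α v) := by
  set A : ℝ := (∫ z, radialKernel (1 + α) 2 1 z) + ∫ z, radialKernel 2 (1 + α) 1 z with hA
  refine ⟨324 * 2 ^ α * A, fun K hK U hUm hU v hvc hv => ?_⟩
  have hbound (x : E3) (i : Fin 3) : ∀ᵐ y : E3,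
      ‖∑ j, ∑ k, dG i j k (x - y) * (U y j * v y k + v y j * U y k)‖ ≤
        108 * K * Xnorm α v * dominatingKernel α x y := by
    filter_upwards [Measure.ae_ne volume (0 : E3), Measure.ae_ne volume x] with y hy hyx
    exact norm_convolution_integrand_le (by linarith) hU hv hK i hy (sub_ne_zero.mpr hyx.symm)
  have hdom (x : E3) : Integrable fun y => 108 * K * Xnorm α v * dominatingKernel α x y :=
    (integrable_dominatingKernel hα1 hα2 x).const_mul _
  refine ⟨fun x i => (hdom x).mono' ?_ (hbound x i), fun u hu => ciSup_le fun x => ?_⟩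
  · have hdG (j k : Fin 3) : Measurable fun y : E3 => dG i j k (x - y) :=
      (measurable_fderiv_apply_const ℝ (G i j) (ee k)).comp (measurable_const.sub measurable_id)
    have hvm := hvc.measurable
    have hcoord {f : E3 → E3} (hf : Measurable f) (j : Fin 3) : Measurable fun y => f y j :=
      (EuclideanSpace.proj (𝕜 := ℝ) j).continuous.measurable.comp hf
    exact (Finset.measurable_sum _ fun j _ => Finset.measurable_sum _ fun k _ =>
      (hdG j k).mul (((hcoord hUm j).mul (hcoord hvm k)).add
        ((hcoord hvm j).mul (hcoord hUm k)))).aestronglyMeasurable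
  · have hui (i : Fin 3) : ‖u x i‖ ≤ 108 * K * Xnorm α v * (((1 + ‖x‖) / 2) ^ (-α) * A) := by
      rw [hu x i, hA, ← integral_dominatingKernel hα1 hα2 x, ← integral_const_mul]
      exact norm_integral_le_of_norm_le (hdom x) (hbound x i)
    have hux : ‖u x‖ ≤ 324 * K * Xnorm α v * (((1 + ‖x‖) / 2) ^ (-α) * A) := by
      refine (norm_le_sum_norm_apply _).trans ((Finset.sum_le_sum fun i _ => hui i).trans_eq ?_)
      simp only [Finset.sum_const, Finset.card_univ, Fintype.card_fin, nsmul_eq_mul]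
      push_cast
      ring
    have hs : 0 < (1 + ‖x‖) ^ α := by positivity
    refine (mul_le_mul_of_nonneg_left hux hs.le).trans_eq ?_
    rw [Real.rpow_neg (by positivity), Real.div_rpow (by positivity) zero_le_two]
    field_simp
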